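/- Let ρ be a Hermitian positive definite d×d matrix, A a Hermitian positive semi-definite d×d matrix with tr(Aρ) > 0, and M any Hermitian d×d matrix. Then (tr(AM))² / (tr(Aρ))² ≤ tr(Mρ⁻¹Mρ⁻¹). Equivalently, the Hessian of f(ρ) = −log tr(Aρ) is dominated by the Hessian of R(ρ) = −log det ρ. -/

import Mathlib

open Matrix
open scoped ComplexOrder

section Helper
open scoped Matrix.Norms.Frobenius

lemma aux_frob {d : ℕ} (X : Matrix (Fin d) (Fin d) ℂ) : (trace (Xᴴ * X)).re = ‖X‖ ^ 2 := by
  rw [Matrix.frobenius_norm_def, ← Real.sqrt_eq_rpow, Real.sq_sqrt (by positivity)]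
  rw [Finset.sum_comm]
  simp only [trace, diag_apply, mul_apply, conjTranspose_apply, Complex.re_sum]
  refine Finset.sum_congr rfl fun i _ => Finset.sum_congr rfl fun j _ => ?_
  simp [← Complex.normSq_eq_norm_sq, Complex.normSq_apply]

lemma aux_sq_nonneg {d : ℕ} (X : Matrix (Fin d) (Fin d) ℂ) (hX : X.IsHermitian) :
    0 ≤ (trace (X * X)).re := by
  have h := aux_frob X
  rw [hX.eq] at h
  rw [h]
  positivity

lemma aux_sq_le {d : ℕ} (C : Matrix (Fin d) (Fin d) ℂ) :
    (trace ((Cᴴ * C) * (Cᴴ * C))).re ≤ (trace (Cᴴ * C)).re ^ 2 := by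
  have h := aux_frob (Cᴴ * C)
  rw [(isHermitian_conjTranspose_mul_self C).eq] at h
  rw [h, aux_frob]
  have h2 := Matrix.frobenius_norm_mul Cᴴ C
  rw [Matrix.frobenius_norm_conjTranspose] at h2
  rw [sq ‖C‖]
  gcongr

end Helper

lemma aux_main {d : ℕ} (C N : Matrix (Fin d) (Fin d) ℂ) (hN : N.IsHermitian)
    (hT : 0 < (trace (Cᴴ * C)).re) :
    (trace ((Cᴴ * C) * N)).re ^ 2 / (trace (Cᴴ * C)).re ^ 2 ≤ (trace (N * N)).re := by
  have hle := aux_sq_le C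
  have hP : (Cᴴ * C).IsHermitian := isHermitian_conjTranspose_mul_self C
  generalize Cᴴ * C = P at *
  set T := (trace P).re
  set a := (trace (P * N)).re with ha
  have key : ∀ t : ℝ, 0 ≤ (trace (N * N)).re - 2 * t * a + t ^ 2 * (trace (P * P)).re := by
    intro t
    have h := aux_sq_nonneg (N - t • P) (by
      rw [IsHermitian, conjTranspose_sub, conjTranspose_smul, hN.eq, hP.eq]; simp)
    have e : (trace ((N - t • P) * (N - t • P))).re
        = (trace (N * N)).re - 2 * t * a + t ^ 2 * (trace (P * P)).re := by
      simp only [sub_mul, mul_sub, trace_sub, smul_mul_assoc, mul_smul_comm, trace_smul,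
        Complex.sub_re, Complex.smul_re, smul_eq_mul, trace_mul_comm N P, ha]
      ring
    rwa [e] at h
  have h := key (a / T ^ 2)
  have h2 : (a / T ^ 2) ^ 2 * (trace (P * P)).re ≤ (a / T ^ 2) ^ 2 * T ^ 2 := by gcongr
  have h3 : (a / T ^ 2) ^ 2 * T ^ 2 = a ^ 2 / T ^ 2 := by field_simp
  have h4 : 2 * (a / T ^ 2) * a = 2 * (a ^ 2 / T ^ 2) := by ring
  linarith

/-- For a Hermitian positive definite `ρ`, a Hermitian positive semi-definite `A` with
`tr(Aρ) > 0`, and any Hermitian `M`: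
`(tr(AM))² / (tr(Aρ))² ≤ tr(Mρ⁻¹Mρ⁻¹)`, i.e. the Hessian of `-log tr(A·)` is dominated by
the Hessian of `-log det`. -/
theorem hessian_loss_le_hessian_logDet {d : ℕ} (ρ A M : Matrix (Fin d) (Fin d) ℂ)
    (hρ : ρ.PosDef) (hA : A.PosSemidef) (htr : 0 < (Matrix.trace (A * ρ)).re)
    (hM : M.IsHermitian) :
    (Matrix.trace (A * M)).re ^ 2 / (Matrix.trace (A * ρ)).re ^ 2 ≤
      (Matrix.trace (M * ρ⁻¹ * M * ρ⁻¹)).re := by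
  obtain ⟨B, rfl⟩ : ∃ B : Matrix (Fin d) (Fin d) ℂ, ρ = Bᴴ * B := by
    open scoped MatrixOrder in
    exact CStarAlgebra.nonneg_iff_eq_star_mul_self.mp hρ.posSemidef.nonneg
  obtain ⟨D, rfl⟩ : ∃ B : Matrix (Fin d) (Fin d) ℂ, A = Bᴴ * B := by
    open scoped MatrixOrder in
    exact CStarAlgebra.nonneg_iff_eq_star_mul_self.mp hA.nonneg
  have hB : IsUnit B.det := by
    have h := hρ.det_pos.ne'
    rw [det_mul] at h
    exact (right_ne_zero_of_mul h).isUnit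
  have hB1 : B * B⁻¹ = 1 := mul_nonsing_inv B hB
  have hB2 : (B⁻¹)ᴴ * Bᴴ = 1 := by rw [← conjTranspose_mul, hB1, conjTranspose_one]
  have hB3 : Bᴴ * (B⁻¹)ᴴ = 1 := by
    rw [← conjTranspose_mul, nonsing_inv_mul B hB, conjTranspose_one]
  have hinv : (Bᴴ * B)⁻¹ = B⁻¹ * (B⁻¹)ᴴ := by
    rw [Matrix.mul_inv_rev, conjTranspose_nonsing_inv]
  have e1 : trace (Dᴴ * D * (Bᴴ * B)) = trace ((D * Bᴴ)ᴴ * (D * Bᴴ)) := by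
    rw [conjTranspose_mul, conjTranspose_conjTranspose, ← Matrix.mul_assoc (Dᴴ * D),
      trace_mul_comm]
    simp only [Matrix.mul_assoc]
  have e2 : trace (Dᴴ * D * M)
      = trace ((D * Bᴴ)ᴴ * (D * Bᴴ) * ((B⁻¹)ᴴ * M * B⁻¹)) := by
    have : (D * Bᴴ)ᴴ * (D * Bᴴ) * ((B⁻¹)ᴴ * M * B⁻¹)
        = B * (Dᴴ * D * (Bᴴ * (B⁻¹)ᴴ) * M * B⁻¹) := by
      rw [conjTranspose_mul, conjTranspose_conjTranspose]
      simp only [Matrix.mul_assoc]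
    rw [this, trace_mul_comm B, hB3, Matrix.mul_one, Matrix.mul_assoc _ B⁻¹ B,
      nonsing_inv_mul B hB, Matrix.mul_one]
  have e3 : trace (M * (Bᴴ * B)⁻¹ * M * (Bᴴ * B)⁻¹)
      = trace (((B⁻¹)ᴴ * M * B⁻¹) * ((B⁻¹)ᴴ * M * B⁻¹)) := by
    rw [hinv, ← Matrix.mul_assoc _ B⁻¹ (B⁻¹)ᴴ, trace_mul_comm]
    simp only [Matrix.mul_assoc]
  rw [e1] at htr
  rw [e1, e2, e3]
  refine aux_main _ _ ?_ htr
  exact isHermitian_conjTranspose_mul_mul _ hM
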